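/- Let D be a quotient-closed lattice, whose members are all regular languages, closed under concatenation, and let ρ : 2^{A*} → R be a multiplicative rating map. Then there exists a rating map τ : 2^{A*} → 2^R such that (1) τ is quasi-multiplicative for the endomorphism U ↦ ↓_R U of (2^R, ∪), and (2) τ(K) = I_{Bool(D)}[K, ρ] for every K ∈ D. -/

import Mathlib

open Set

namespace Paper

abbrev Lang (A : Type) := Set (List A)
abbrev LClass (A : Type) := Set (Set (List A))

variable {A R M : Type}

/-- A lattice of languages: contains `∅` and `A*`, closed under finite union
and finite intersection. -/
def LangLattice (𝒞 : LClass A) : Prop :=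
  (∅ : Lang A) ∈ 𝒞 ∧ (Set.univ : Lang A) ∈ 𝒞 ∧
    (∀ K L : Lang A, K ∈ 𝒞 → L ∈ 𝒞 → K ∪ L ∈ 𝒞) ∧
    (∀ K L : Lang A, K ∈ 𝒞 → L ∈ 𝒞 → K ∩ L ∈ 𝒞)

/-- A Boolean algebra of languages: a lattice closed under complement. -/
def LangBoolAlg (𝒞 : LClass A) : Prop :=
  LangLattice 𝒞 ∧ ∀ L : Lang A, L ∈ 𝒞 → Lᶜ ∈ 𝒞

/-- A class is quotient-closed when it is closed under left and right quotients
by words. -/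
def QuotientClosed (𝒞 : LClass A) : Prop :=
  ∀ L ∈ 𝒞, ∀ w : List A,
    {u : List A | w ++ u ∈ L} ∈ 𝒞 ∧ {u : List A | u ++ w ∈ L} ∈ 𝒞

/-- The canonical preorder `≤_𝒞` associated with a class `𝒞`. -/
def cle (𝒞 : LClass A) (w w' : List A) : Prop := ∀ L ∈ 𝒞, w ∈ L → w' ∈ L

/-- The canonical equivalence `∼_𝒞` associated with a class `𝒞`. -/
def ceq (𝒞 : LClass A) (w w' : List A) : Prop := ∀ L ∈ 𝒞, (w ∈ L ↔ w' ∈ L)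

/-- The `∼_𝒞`-class of the word `w`. -/
def cclass (𝒞 : LClass A) (w : List A) : Lang A := {v | ceq 𝒞 w v}

/-- `D` is a `∼_𝒞`-class. -/
def IsCClass (𝒞 : LClass A) (D : Lang A) : Prop := ∃ w : List A, D = cclass 𝒞 w

/-- Multiplication of `∼_𝒞`-classes (the class of the concatenation of
representatives). -/
def cmul (𝒞 : LClass A) (D E : Lang A) : Lang A :=
  {x | ∃ u ∈ D, ∃ v ∈ E, ceq 𝒞 (u ++ v) x}

/-- Language concatenation. -/
def cat (K L : Lang A) : Lang A := {w | ∃ u ∈ K, ∃ v ∈ L, u ++ v = w}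

/-- Marked concatenation `K a L`. -/
def mcat (K : Lang A) (a : A) (L : Lang A) : Lang A :=
  {w | ∃ u ∈ K, ∃ v ∈ L, u ++ a :: v = w}

/-- Boolean closure: the least Boolean algebra containing `𝒞`. -/
def BoolC (𝒞 : LClass A) : LClass A := ⋂₀ {𝒟 : LClass A | LangBoolAlg 𝒟 ∧ 𝒞 ⊆ 𝒟}

/-- Polynomial closure: the least class containing `𝒞` closed under union and
marked concatenation. -/
def PolC (𝒞 : LClass A) : LClass A :=
  ⋂₀ {𝒟 : LClass A | 𝒞 ⊆ 𝒟 ∧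
    (∀ K L : Lang A, K ∈ 𝒟 → L ∈ 𝒟 → K ∪ L ∈ 𝒟) ∧
    (∀ (K L : Lang A) (a : A), K ∈ 𝒟 → L ∈ 𝒟 → mcat K a L ∈ 𝒟)}

/-- A cover of `L`: a finite set of languages whose union includes `L`. -/
def IsCover (Ks : LClass A) (L : Lang A) : Prop := Ks.Finite ∧ L ⊆ ⋃₀ Ks

/-- A `𝒞`-cover of `L`: a cover all of whose members belong to `𝒞`. -/
def IsCCover (𝒞 Ks : LClass A) (L : Lang A) : Prop := IsCover Ks L ∧ Ks ⊆ 𝒞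

/-- `α : A* → M` is a monoid morphism. -/
def IsMonoidMorphism [Monoid M] (α : List A → M) : Prop :=
  α [] = 1 ∧ ∀ u v : List A, α (u ++ v) = α u * α v

/-- `α` recognizes `L`. -/
def Recognizes [Monoid M] (α : List A → M) (L : Lang A) : Prop :=
  ∃ F : Set M, L = α ⁻¹' F

/-- A language is regular when it is recognized by a monoid morphism into a
finite monoid. -/
def RegularLang (L : Lang A) : Prop :=
  ∃ (N : Type) (_ : Monoid N) (_ : Finite N) (α : List A → N),
    IsMonoidMorphism α ∧ Recognizes α L

/-- The canonical order on a rating set: `r ≤ s` iff `r + s = s`. -/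
def rle [Add R] (r s : R) : Prop := r + s = s

/-- A rating map: maps `∅` to `0` and commutes with binary union. -/
def IsRatingMap [AddCommMonoid R] (ρ : Lang A → R) : Prop :=
  ρ ∅ = 0 ∧ ∀ K L : Lang A, ρ (K ∪ L) = ρ K + ρ L

/-- A nice rating map: the value of any language is a finite sum of values of
its words. -/
def IsNice [AddCommMonoid R] (ρ : Lang A → R) : Prop :=
  ∀ K : Lang A, ∃ l : List (List A), (∀ w ∈ l, w ∈ K) ∧
    ρ K = (l.map fun w => ρ {w}).sum

/-- A multiplicative rating map: also a morphism for concatenation. -/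
def IsMultiplicative [Semiring R] (ρ : Lang A → R) : Prop :=
  ρ ({[]} : Lang A) = 1 ∧ ∀ K L : Lang A, ρ (cat K L) = ρ K * ρ L

/-- An endomorphism of the additive monoid `(R, +)`. -/
def IsAddEndo [AddCommMonoid R] (γ : R → R) : Prop :=
  γ 0 = 0 ∧ ∀ r s : R, γ (r + s) = γ r + γ s

/-- A quasi-multiplicative rating map for the endomorphism `γ`. -/
def IsQuasiMult [Semiring R] (ρ : Lang A → R) (γ : R → R) : Prop :=
  IsAddEndo γ ∧ (∀ q r s : R, γ (q * γ r * s) = γ (q * r * s)) ∧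
    ∀ K L : Lang A, ρ (cat K L) = γ (ρ K * ρ L)

/-- The `ρ`-imprint of a set of languages. -/
def imprint [Add R] (ρ : Lang A → R) (Ks : LClass A) : Set R :=
  {r | ∃ K ∈ Ks, rle r (ρ K)}

/-- The `𝒟`-optimal `ρ`-imprint on `L` (the imprint of any optimal `𝒟`-cover
of `L`, i.e. the intersection of the imprints of all `𝒟`-covers of `L`). -/
def optImprint [Add R] (𝒟 : LClass A) (ρ : Lang A → R) (L : Lang A) : Set R :=
  {r | ∀ Ks : LClass A, IsCCover 𝒟 Ks L → r ∈ imprint ρ Ks}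

/-- Downset operation on subsets of a rating set. -/
def dclos [Add R] (U : Set R) : Set R := {r | ∃ s ∈ U, rle r s}

/-- Pointwise multiplication of subsets of a rating set. -/
def smul [Mul R] (U V : Set R) : Set R := {x | ∃ u ∈ U, ∃ v ∈ V, u * v = x}

theorem aux_sInter {𝒞 : LClass A} (h : LangLattice 𝒞) {S : LClass A} (hS : S.Finite)
    (hsub : S ⊆ 𝒞) : ⋂₀ S ∈ 𝒞 := by
  induction S, hS using Set.Finite.induction_on with
  | empty => simpa using h.2.1
  | @insert a s _ _ ih =>
    rw [Set.sInter_insert]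
    exact h.2.2.2 _ _ (hsub (Set.mem_insert _ _))
      (ih (fun x hx => hsub (Set.mem_insert_of_mem _ hx)))

theorem boolC_alg (𝒟 : LClass A) : LangBoolAlg (BoolC 𝒟) := by
  refine ⟨⟨?_, ?_, ?_, ?_⟩, ?_⟩
  · intro 𝒞 h; exact h.1.1.1
  · intro 𝒞 h; exact h.1.1.2.1
  · intro K L hK hL 𝒞 h; exact h.1.1.2.2.1 _ _ (hK 𝒞 h) (hL 𝒞 h)
  · intro K L hK hL 𝒞 h; exact h.1.1.2.2.2 _ _ (hK 𝒞 h) (hL 𝒞 h)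
  · intro L hL 𝒞 h; exact h.1.2 _ (hL 𝒞 h)

theorem sub_boolC (𝒟 : LClass A) : 𝒟 ⊆ BoolC 𝒟 := fun _ hL _ h => h.2 hL

theorem boolC_ind {𝒟 : LClass A} (P : Lang A → Prop) (hD : ∀ L ∈ 𝒟, P L)
    (h0 : P ∅) (hu : ∀ K L, P K → P L → P (K ∪ L)) (hc : ∀ L, P L → P Lᶜ) :
    ∀ L ∈ BoolC 𝒟, P L := by
  intro L hL
  refine hL {L | P L} ⟨⟨⟨h0, ?_, hu, ?_⟩, hc⟩, hD⟩
  · have := hc _ h0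
    simpa using this
  · intro K L hK hL
    have := hc _ (hu _ _ (hc _ hK) (hc _ hL))
    simpa [Set.compl_union] using this

theorem boolC_det {𝒟 : LClass A} : ∀ L ∈ BoolC 𝒟, ∃ F : LClass A, F.Finite ∧ F ⊆ 𝒟 ∧
    ∀ u v, ceq F u v → (u ∈ L ↔ v ∈ L) := by
  apply boolC_ind
  · intro L hL
    exact ⟨{L}, Set.finite_singleton _, by simpa using hL, fun u v h => h L rfl⟩
  · exact ⟨∅, Set.finite_empty, by simp, by simp⟩
  · rintro K L ⟨F, hF, hFD, h⟩ ⟨G, hG, hGD, h'⟩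
    refine ⟨F ∪ G, hF.union hG, Set.union_subset hFD hGD, fun u v huv => ?_⟩
    have h1 := h u v (fun L hL => huv L (Or.inl hL))
    have h2 := h' u v (fun L hL => huv L (Or.inr hL))
    simp [h1, h2]
  · rintro L ⟨F, hF, hFD, h⟩
    exact ⟨F, hF, hFD, fun u v huv => not_congr (h u v huv)⟩

theorem boolC_quot {𝒟 : LClass A} (hqc : QuotientClosed 𝒟) : QuotientClosed (BoolC 𝒟) := by
  unfold QuotientClosed
  have hb := boolC_alg 𝒟
  apply boolC_ind
  · intro L hL w
    exact ⟨sub_boolC _ (hqc L hL w).1, sub_boolC _ (hqc L hL w).2⟩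
  · intro w; exact ⟨hb.1.1, hb.1.1⟩
  · intro K L hK hL w
    exact ⟨hb.1.2.2.1 _ _ (hK w).1 (hL w).1, hb.1.2.2.1 _ _ (hK w).2 (hL w).2⟩
  · intro L hL w
    exact ⟨hb.2 _ (hL w).1, hb.2 _ (hL w).2⟩

theorem reg_fin {L : Lang A} (h : RegularLang L) :
    (Set.range fun w : List A => {u : List A | w ++ u ∈ L}).Finite ∧
    (Set.range fun w : List A => {u : List A | u ++ w ∈ L}).Finite := by
  obtain ⟨N, _, _, α, hα, F, rfl⟩ := h
  constructor
  · refine (Set.finite_range fun n : N => {u : List A | n * α u ∈ F}).subset ?_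
    rintro _ ⟨w, rfl⟩
    exact ⟨α w, by ext u; simp [hα.2]⟩
  · refine (Set.finite_range fun n : N => {u : List A | α u * n ∈ F}).subset ?_
    rintro _ ⟨w, rfl⟩
    exact ⟨α w, by ext u; simp [hα.2]⟩

theorem boolC_fin {𝒟 : LClass A} (hreg : ∀ L ∈ 𝒟, RegularLang L) : ∀ L ∈ BoolC 𝒟,
    (Set.range fun w : List A => {u : List A | u ++ w ∈ L}).Finite := by
  apply boolC_ind
  · intro L hL; exact (reg_fin (hreg L hL)).2
  · refine (Set.finite_singleton (∅ : Lang A)).subset ?_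
    rintro _ ⟨w, rfl⟩; rfl
  · intro K L hK hL
    refine (Set.Finite.image2 (fun X Y : Lang A => X ∪ Y) hK hL).subset ?_
    rintro _ ⟨w, rfl⟩
    exact ⟨_, ⟨w, rfl⟩, _, ⟨w, rfl⟩, rfl⟩
  · intro L hL
    refine (hL.image (fun X : Lang A => Xᶜ)).subset ?_
    rintro _ ⟨w, rfl⟩
    exact ⟨_, ⟨w, rfl⟩, rfl⟩

theorem cclass_mem {𝒞 F : LClass A} (h : LangBoolAlg 𝒞) (hF : F.Finite) (hs : F ⊆ 𝒞)
    (u : List A) : cclass F u ∈ 𝒞 := by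
  classical
  have : cclass F u = ⋂₀ ((fun U : Lang A => if u ∈ U then U else Uᶜ) '' F) := by
    ext v
    simp only [cclass, ceq, Set.mem_ofPred_eq, Set.sInter_image, Set.mem_iInter]
    refine forall₂_congr fun L hL => ?_
    by_cases hu : u ∈ L <;> simp [hu]
  rw [this]
  refine aux_sInter h.1 (hF.image _) ?_
  rintro _ ⟨U, hU, rfl⟩
  dsimp only
  split_ifs
  · exact hs hU
  · exact h.2 _ (hs hU)

theorem cclass_cover {𝒞 F : LClass A} (h : LangBoolAlg 𝒞) (hF : F.Finite) (hs : F ⊆ 𝒞)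
    (L : Lang A) : IsCCover 𝒞 (cclass F '' L) L := by
  refine ⟨⟨?_, ?_⟩, ?_⟩
  · refine ((hF.finite_subsets).image
      (fun S : LClass A => {v : List A | ∀ U ∈ F, (U ∈ S ↔ v ∈ U)})).subset ?_
    rintro _ ⟨u, _, rfl⟩
    refine ⟨{U ∈ F | u ∈ U}, fun x hx => hx.1, ?_⟩
    ext v
    simp only [cclass, ceq, Set.mem_ofPred_eq]
    refine forall₂_congr fun U hU => ?_
    simp [hU]
  · intro u hu
    exact ⟨_, ⟨u, hu, rfl⟩, fun _ _ => Iff.rfl⟩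
  · rintro _ ⟨u, _, rfl⟩
    exact cclass_mem h hF hs u

section
variable [Semiring R]

theorem rle_trans' {a b c : R} (h : rle a b) (h' : rle b c) : rle a c := by
  unfold rle at *
  rw [← h', ← add_assoc, h]

theorem rle_mul {a b c d : R} (h : rle a b) (h' : rle c d) : rle (a * c) (b * d) := by
  have h1 : rle (a * c) (a * d) := by unfold rle at *; rw [← mul_add, h']
  have h2 : rle (a * d) (b * d) := by unfold rle at *; rw [← add_mul, h]
  exact rle_trans' h1 h2

theorem rho_mono {ρ : Lang A → R} (hρ : IsRatingMap ρ) {K L : Lang A} (h : K ⊆ L) :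
    rle (ρ K) (ρ L) := by
  unfold rle
  rw [← hρ.2, Set.union_eq_self_of_subset_left h]

theorem opt_mono {𝒞 : LClass A} {ρ : Lang A → R} {K L : Lang A} (h : K ⊆ L) :
    optImprint 𝒞 ρ K ⊆ optImprint 𝒞 ρ L :=
  fun _ hr Ks hKs => hr Ks ⟨⟨hKs.1.1, h.trans hKs.1.2⟩, hKs.2⟩

theorem opt_down {𝒞 : LClass A} {ρ : Lang A → R} {L : Lang A} {r s : R} (h : rle r s)
    (hs : s ∈ optImprint 𝒞 ρ L) : r ∈ optImprint 𝒞 ρ L := by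
  intro Ks hKs
  obtain ⟨K, hK, hsK⟩ := hs Ks hKs
  exact ⟨K, hK, rle_trans' h hsK⟩

theorem opt_union {𝒞 : LClass A} {ρ : Lang A → R} {K L : Lang A} :
    optImprint 𝒞 ρ (K ∪ L) ⊆ optImprint 𝒞 ρ K ∪ optImprint 𝒞 ρ L := by
  intro r hr
  by_contra hcon
  simp only [Set.mem_union, not_or, optImprint, Set.mem_ofPred_eq, not_forall] at hcon
  obtain ⟨⟨Ks, hKs, hn⟩, Ls, hLs, hn'⟩ := hcon
  obtain ⟨X, hX, hrX⟩ := hr (Ks ∪ Ls) ⟨⟨hKs.1.1.union hLs.1.1, by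
    rw [Set.sUnion_union]; exact Set.union_subset_union hKs.1.2 hLs.1.2⟩,
    Set.union_subset hKs.2 hLs.2⟩
  rcases hX with hX | hX
  · exact hn ⟨X, hX, hrX⟩
  · exact hn' ⟨X, hX, hrX⟩

/-- Optimal imprints are super-multiplicative. -/
theorem opt_mul {𝒟 : LClass A} (hqc : QuotientClosed 𝒟) (hreg : ∀ L ∈ 𝒟, RegularLang L)
    {ρ : Lang A → R} (hρ : IsRatingMap ρ) (hmult : IsMultiplicative ρ) {L H : Lang A} {r s : R}
    (hr : r ∈ optImprint (BoolC 𝒟) ρ L) (hs : s ∈ optImprint (BoolC 𝒟) ρ H) :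
    r * s ∈ optImprint (BoolC 𝒟) ρ (cat L H) := by
  intro Ks hKs
  have hb := boolC_alg 𝒟
  have hq := boolC_quot hqc
  let X : LClass A := ⋃ K ∈ Ks, Set.range fun w : List A => {u : List A | u ++ w ∈ K}
  have hX : X.Finite := hKs.1.1.biUnion fun K hK => boolC_fin hreg K (hKs.2 hK)
  have hXs : X ⊆ BoolC 𝒟 := by
    intro Y hY
    simp only [X, Set.mem_iUnion] at hY
    obtain ⟨K, hK, w, rfl⟩ := hY
    exact (hq K (hKs.2 hK) w).2
  obtain ⟨_, ⟨u, hu, rfl⟩, hru⟩ := hr _ (cclass_cover hb hX hXs L)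
  obtain ⟨_, ⟨K, hK, rfl⟩, hsK⟩ := hs ((fun K : Lang A => {v : List A | u ++ v ∈ K}) '' Ks) (by
    refine ⟨⟨hKs.1.1.image _, ?_⟩, ?_⟩
    · intro v hv
      obtain ⟨K, hK, hm⟩ := hKs.1.2 (show u ++ v ∈ cat L H from ⟨u, hu, v, hv, rfl⟩)
      exact ⟨_, ⟨K, hK, rfl⟩, hm⟩
    · rintro _ ⟨K, hK, rfl⟩
      exact (hq K (hKs.2 hK) u).1)
  refine ⟨K, hK, rle_trans' (rle_mul hru hsK) ?_⟩
  rw [← hmult.2]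
  apply rho_mono hρ
  rintro _ ⟨x, hx, v, hv, rfl⟩
  have hmem : {u : List A | u ++ v ∈ K} ∈ X := by
    simp only [X, Set.mem_iUnion]
    exact ⟨K, hK, v, rfl⟩
  exact (hx _ hmem).1 hv

theorem opt_exists [Finite R] (hidem : ∀ r : R, r + r = r) {𝒟 : LClass A}
    {ρ : Lang A → R} (hρ : IsRatingMap ρ) (L : Lang A) :
    ∃ F : LClass A, F.Finite ∧ F ⊆ 𝒟 ∧ ∀ F', F ⊆ F' → ∀ u ∈ L,
      ρ (cclass F' u) ∈ optImprint (BoolC 𝒟) ρ L := by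
  have key : ∀ r : R, ∃ F : LClass A, F.Finite ∧ F ⊆ 𝒟 ∧ (r ∉ optImprint (BoolC 𝒟) ρ L →
      ∀ F', F ⊆ F' → ∀ u ∈ L, ¬ rle r (ρ (cclass F' u))) := by
    intro r
    by_cases hr : r ∈ optImprint (BoolC 𝒟) ρ L
    · exact ⟨∅, Set.finite_empty, by simp, fun h => absurd hr h⟩
    have hr' := hr
    simp only [optImprint, Set.mem_ofPred_eq, not_forall] at hr'
    obtain ⟨Ks, hKs, hn⟩ := hr'
    choose! F hF hFD hdet using (boolC_det (𝒟 := 𝒟))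
    refine ⟨⋃ K ∈ Ks, F K, hKs.1.1.biUnion fun K hK => hF K (hKs.2 hK),
      Set.iUnion₂_subset fun K hK => hFD K (hKs.2 hK), fun _ F' hF' u hu hle => ?_⟩
    obtain ⟨K, hK, huK⟩ := hKs.1.2 hu
    refine hn ⟨K, hK, rle_trans' hle (rho_mono hρ fun v hv => ?_)⟩
    refine (hdet K (hKs.2 hK) u v fun U hU => hv U (hF' ?_)).1 huK
    exact Set.mem_biUnion hK hU
  choose F hF hFD h using key
  refine ⟨⋃ r, F r, Set.finite_iUnion hF, Set.iUnion_subset hFD, fun F' hF' u hu => ?_⟩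
  by_contra hcon
  exact h _ hcon F' ((Set.subset_iUnion F _).trans hF') u hu (hidem _)

/-- Optimal imprints are sub-multiplicative on languages in `𝒟`. -/
theorem opt_cat [Finite R] (hidem : ∀ r : R, r + r = r) {𝒟 : LClass A} (hlat : LangLattice 𝒟)
    (hcat : ∀ K L : Lang A, K ∈ 𝒟 → L ∈ 𝒟 → cat K L ∈ 𝒟)
    {ρ : Lang A → R} (hρ : IsRatingMap ρ) (hmult : IsMultiplicative ρ) {L₁ L₂ : Lang A}
    (h₁ : L₁ ∈ 𝒟) (h₂ : L₂ ∈ 𝒟) {r : R} (hr : r ∈ optImprint (BoolC 𝒟) ρ (cat L₁ L₂)) :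
    ∃ a ∈ optImprint (BoolC 𝒟) ρ L₁, ∃ b ∈ optImprint (BoolC 𝒟) ρ L₂, rle r (a * b) := by
  obtain ⟨F₁, hF₁, hFD₁, hopt₁⟩ := opt_exists hidem (𝒟 := 𝒟) hρ L₁
  obtain ⟨F₂, hF₂, hFD₂, hopt₂⟩ := opt_exists hidem (𝒟 := 𝒟) hρ L₂
  let F : LClass A := F₁ ∪ F₂ ∪ {L₁, L₂}
  have hF : F.Finite := (hF₁.union hF₂).union (Set.toFinite _)
  have hFD : F ⊆ 𝒟 := by
    rintro X ((hX | hX) | (rfl | rfl))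
    exacts [hFD₁ hX, hFD₂ hX, h₁, h₂]
  have hL₁ : L₁ ∈ F := Or.inr (Or.inl rfl)
  have hL₂ : L₂ ∈ F := Or.inr (Or.inr rfl)
  let G : LClass A := Set.image2 (fun S T : LClass A => cat (⋂₀ S) (⋂₀ T)) (𝒫 F) (𝒫 F)
  have hG : G.Finite := Set.Finite.image2 _ hF.finite_subsets hF.finite_subsets
  have hGD : G ⊆ 𝒟 := by
    rintro _ ⟨S, hS, T, hT, rfl⟩
    exact hcat _ _ (aux_sInter hlat (hF.subset hS) (hS.trans hFD))
      (aux_sInter hlat (hF.subset hT) (hT.trans hFD))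
  obtain ⟨_, ⟨w, hw, rfl⟩, hrw⟩ := hr _
    (cclass_cover (boolC_alg 𝒟) hG (hGD.trans (sub_boolC 𝒟)) (cat L₁ L₂))
  let t : List A → LClass A := fun u => {U ∈ F | u ∈ U}
  have htF : ∀ u, t u ⊆ F := fun u x hx => hx.1
  let P : Set (LClass A × LClass A) :=
    {p | ∃ u ∈ L₁, ∃ v ∈ L₂, u ++ v = w ∧ p = (t u, t v)}
  have hPfin : P.Finite := by
    refine ((hF.finite_subsets).prod (hF.finite_subsets)).subset ?_
    rintro _ ⟨u, _, v, _, _, rfl⟩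
    exact ⟨htF u, htF v⟩
  have hPne : P.Nonempty := by
    obtain ⟨u, hu, v, hv, h⟩ := hw
    exact ⟨_, u, hu, v, hv, h, rfl⟩
  obtain ⟨p, hp⟩ := hPfin.exists_maximal hPne
  obtain ⟨⟨u, hu, v, hv, huv, rfl⟩, hmax⟩ := hp
  refine ⟨_, hopt₁ F (fun x hx => Or.inl (Or.inl hx)) u hu,
    _, hopt₂ F (fun x hx => Or.inl (Or.inr hx)) v hv, rle_trans' hrw ?_⟩
  rw [← hmult.2]
  apply rho_mono hρ
  intro w' hw'
  have hmemG : ∀ x y, cat (⋂₀ (t x)) (⋂₀ (t y)) ∈ G := fun x y =>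
    ⟨_, htF x, _, htF y, rfl⟩
  have hself : ∀ x, x ∈ ⋂₀ (t x) := fun x U hU => hU.2
  have hsub : ∀ x y, y ∈ ⋂₀ (t x) → t x ⊆ t y := fun x y h U hU => ⟨hU.1, h U hU⟩
  obtain ⟨x, hx, y, hy, hxy⟩ := (hw' _ (hmemG u v)).1 ⟨u, hself u, v, hself v, huv⟩
  obtain ⟨x', hx', y', hy', hxy'⟩ := (hw' _ (hmemG x y)).2 ⟨x, hself x, y, hself y, hxy⟩
  have a1 := hsub _ _ hx
  have a2 := hsub _ _ hy
  have b1 := hsub _ _ hx'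
  have b2 := hsub _ _ hy'
  have hle := hmax (y := (t x', t y'))
    ⟨x', (b1 (a1 ⟨hL₁, hu⟩)).2, y', (b2 (a2 ⟨hL₂, hv⟩)).2, hxy', rfl⟩
    ⟨a1.trans b1, a2.trans b2⟩
  refine ⟨x, ?_, y, ?_, hxy⟩
  · intro U hU
    exact ⟨fun h => (a1 ⟨hU, h⟩).2, fun h => (hle.1 (b1 ⟨hU, h⟩)).2⟩
  · intro U hU
    exact ⟨fun h => (a2 ⟨hU, h⟩).2, fun h => (hle.2 (b2 ⟨hU, h⟩)).2⟩

/-- The extension of the optimal imprint from `𝒟` to all languages. -/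
def tauMap (𝒟 : LClass A) (ρ : Lang A → R) (K : Lang A) : Set R :=
  {r | ∀ L ∈ 𝒟, K ⊆ L → r ∈ optImprint (BoolC 𝒟) ρ L}

theorem tau_exists [Finite R] {𝒟 : LClass A} (hlat : LangLattice 𝒟) (ρ : Lang A → R)
    (K : Lang A) : ∃ L ∈ 𝒟, K ⊆ L ∧ optImprint (BoolC 𝒟) ρ L ⊆ tauMap 𝒟 ρ K := by
  have key : ∀ r : R, ∃ L ∈ 𝒟, K ⊆ L ∧ (r ∈ optImprint (BoolC 𝒟) ρ L → r ∈ tauMap 𝒟 ρ K) := by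
    intro r
    by_cases hr : r ∈ tauMap 𝒟 ρ K
    · exact ⟨Set.univ, hlat.2.1, Set.subset_univ _, fun _ => hr⟩
    · have hr' := hr
      simp only [tauMap, Set.mem_ofPred_eq, not_forall] at hr'
      obtain ⟨L, hL, hKL, hn⟩ := hr'
      exact ⟨L, hL, hKL, fun h => absurd h hn⟩
  choose L hL hKL h using key
  refine ⟨⋂₀ (Set.range L), aux_sInter hlat (Set.finite_range L) ?_, ?_, fun r hr => ?_⟩
  · rintro _ ⟨r, rfl⟩; exact hL r
  · rintro x hx _ ⟨r, rfl⟩; exact hKL r hx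
  · exact h r (opt_mono (Set.sInter_subset_of_mem (Set.mem_range_self r)) hr)

end

/-- For a quotient-closed lattice `𝒟` of regular languages
closed under concatenation and a multiplicative rating map `ρ`, there is a
rating map `τ : 2^{A*} → 2^R` which is quasi-multiplicative for the downset
endomorphism `U ↦ ↓_R U` and coincides with `K ↦ I_{Bool(𝒟)}[K, ρ]` on `𝒟`. -/
theorem statement14 {A R : Type} [Fintype A] [Semiring R] [Finite R]
    (hidem : ∀ r : R, r + r = r)
    (𝒟 : LClass A) (hlat : LangLattice 𝒟) (hqc : QuotientClosed 𝒟)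
    (hreg : ∀ L ∈ 𝒟, RegularLang L)
    (hcat : ∀ K L : Lang A, K ∈ 𝒟 → L ∈ 𝒟 → cat K L ∈ 𝒟)
    (ρ : Lang A → R) (hρ : IsRatingMap ρ) (hmult : IsMultiplicative ρ) :
    ∃ τ : Lang A → Set R,
      (τ ∅ = ∅ ∧ ∀ K L : Lang A, τ (K ∪ L) = τ K ∪ τ L) ∧
      ((∀ T U V : Set R,
          dclos (smul T (smul (dclos U) V)) = dclos (smul T (smul U V))) ∧
        ∀ K₁ K₂ : Lang A, τ (cat K₁ K₂) = dclos (smul (τ K₁) (τ K₂))) ∧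
      (∀ K ∈ 𝒟, τ K = optImprint (BoolC 𝒟) ρ K) := by
  refine ⟨tauMap 𝒟 ρ, ⟨?_, ?_⟩, ⟨?_, ?_⟩, ?_⟩
  · ext r
    simp only [Set.mem_empty_iff_false, iff_false]
    intro h
    obtain ⟨K, hK, _⟩ := h ∅ hlat.1 (Set.Subset.refl _) ∅
      ⟨⟨Set.finite_empty, by simp⟩, by simp⟩
    exact hK
  · intro K L
    apply Set.Subset.antisymm
    · intro r hr
      obtain ⟨K', hK', hKK', hK⟩ := tau_exists hlat ρ K
      obtain ⟨L', hL', hLL', hL⟩ := tau_exists hlat ρ L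
      rcases opt_union (hr _ (hlat.2.2.1 _ _ hK' hL') (Set.union_subset_union hKK' hLL'))
        with h | h
      · exact Or.inl (hK h)
      · exact Or.inr (hL h)
    · rintro r (hr | hr) H hH hs
      · exact hr H hH (Set.subset_union_left.trans hs)
      · exact hr H hH (Set.subset_union_right.trans hs)
  · intro T U V
    ext r
    constructor
    · rintro ⟨_, ⟨t, ht, _, ⟨u, ⟨u', hu', huu⟩, v, hv, rfl⟩, rfl⟩, hr⟩
      exact ⟨_, ⟨t, ht, _, ⟨u', hu', v, hv, rfl⟩, rfl⟩,
        rle_trans' hr (rle_mul (hidem t) (rle_mul huu (hidem v)))⟩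
    · rintro ⟨_, ⟨t, ht, _, ⟨u, hu, v, hv, rfl⟩, rfl⟩, hr⟩
      exact ⟨_, ⟨t, ht, _, ⟨u, ⟨u, hu, hidem u⟩, v, hv, rfl⟩, rfl⟩, hr⟩
  · intro K₁ K₂
    apply Set.Subset.antisymm
    · intro r hr
      obtain ⟨L₁, hL₁, hs₁, ho₁⟩ := tau_exists hlat ρ K₁
      obtain ⟨L₂, hL₂, hs₂, ho₂⟩ := tau_exists hlat ρ K₂
      obtain ⟨a, ha, b, hb, hab⟩ := opt_cat hidem hlat hcat hρ hmult hL₁ hL₂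
        (hr _ (hcat _ _ hL₁ hL₂) (by
          rintro _ ⟨x, hx, y, hy, rfl⟩
          exact ⟨x, hs₁ hx, y, hs₂ hy, rfl⟩))
      exact ⟨_, ⟨a, ho₁ ha, b, ho₂ hb, rfl⟩, hab⟩
    · rintro r ⟨_, ⟨a, ha, b, hb, rfl⟩, hr⟩ L hL hs
      refine opt_down hr ?_
      have hfin := reg_fin (hreg L hL)
      let H₁ : Lang A := ⋂₀ ((fun w : List A => {u : List A | u ++ w ∈ L}) '' K₂)
      let H₂ : Lang A := ⋂₀ ((fun w : List A => {u : List A | w ++ u ∈ L}) '' H₁)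
      have hH₁ : H₁ ∈ 𝒟 := by
        refine aux_sInter hlat (hfin.2.subset (Set.image_subset_range _ _)) ?_
        rintro _ ⟨w, _, rfl⟩
        exact (hqc L hL w).2
      have hH₂ : H₂ ∈ 𝒟 := by
        refine aux_sInter hlat (hfin.1.subset (Set.image_subset_range _ _)) ?_
        rintro _ ⟨w, _, rfl⟩
        exact (hqc L hL w).1
      have hK₁ : K₁ ⊆ H₁ := by
        rintro u hu _ ⟨v, hv, rfl⟩
        exact hs ⟨u, hu, v, hv, rfl⟩
      have hK₂ : K₂ ⊆ H₂ := by
        rintro v hv _ ⟨u, hu, rfl⟩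
        exact hu _ ⟨v, hv, rfl⟩
      have hsub : cat H₁ H₂ ⊆ L := by
        rintro _ ⟨u, hu, v, hv, rfl⟩
        exact hv _ ⟨u, hu, rfl⟩
      exact opt_mono hsub (opt_mul hqc hreg hρ hmult (ha _ hH₁ hK₁) (hb _ hH₂ hK₂))
  · intro K hK
    apply Set.Subset.antisymm
    · intro r hr
      exact hr K hK (Set.Subset.refl _)
    · intro r hr L _ hs
      exact opt_mono hs hr


end Paper
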